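/- arXiv:1610.01150 — 2 statements merged into one kernel-verified Lean document; each statement's English description precedes it below -/
import Mathlib

section
/- The optimal inspection time lies in the set $\{T_j - 1 : j = 1, \dots, N\} \cup \{T^*\}$ (Proposition 4). Let $C_{insp} : \mathbb{N} \to \mathbb{R}$ be strictly antitone, let $N \ge 1$, let $T : \mathrm{Fin}\, N \to \mathbb{N}$ be strictly monotone with $0 < T_i < T^*$ for all $i$, let $n : \mathrm{Fin}\, N \to \mathbb{N}$ and $C_{rep}, C_{out} : \mathbb{N} \to \mathbb{R}$, and define $F(s) = C_{insp}(s) + \sum_{i : T_i \le s} \big(n_i\, C_{rep}(T_i) + C_{out}(T_i)\big)$. Then for every natural $s$ with $1 \le s \le T^*$ there exists $s'$ with $1 \le s' \le T^*$, $s' \in \{T_j - 1 : j \in \mathrm{Fin}\, N\} \cup \{T^*\}$, and $F(s') \le F(s)$. -/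
open Finset

/-- Proposition 4: for every candidate inspection time `s ∈ {1, …, T*}` there
is an inspection time `s'` in `{T j - 1 : j = 1, …, N} ∪ {T*}` with total cost
at most that of `s`; hence the optimal inspection time lies in that set. -/
theorem optimal_inspection_at_deadline_minus_one_or_horizon
    (Cinsp : ℕ → ℝ) (hCinsp : StrictAnti Cinsp)
    (N : ℕ) (hN : 1 ≤ N) (Tstar : ℕ)
    (T : Fin N → ℕ) (hT : StrictMono T)
    (hTpos : ∀ i : Fin N, 0 < T i) (hTlt : ∀ i : Fin N, T i < Tstar)
    (n : Fin N → ℕ) (Crep Cout : ℕ → ℝ) (F : ℕ → ℝ)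
    (hF : ∀ s : ℕ, F s = Cinsp s +
      ∑ i ∈ Finset.univ.filter (fun i : Fin N => T i ≤ s),
        ((n i : ℝ) * Crep (T i) + Cout (T i))) :
    ∀ s : ℕ, 1 ≤ s → s ≤ Tstar →
      ∃ s' : ℕ, 1 ≤ s' ∧ s' ≤ Tstar ∧
        ((∃ j : Fin N, s' = T j - 1) ∨ s' = Tstar) ∧ F s' ≤ F s := by
  intro s hs hsT
  have cost_le : ∀ s', s ≤ s' → (∀ i, T i ≤ s' → T i ≤ s) → F s' ≤ F s := by
    intro s' hle hdeadline
    have hfilter : Finset.univ.filter (fun i : Fin N => T i ≤ s') =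
        Finset.univ.filter (fun i : Fin N => T i ≤ s) :=
      Finset.filter_congr fun i _ => ⟨hdeadline i, fun h => h.trans hle⟩
    rw [hF, hF, hfilter]
    exact add_le_add_left (hCinsp.antitone hle) _
  by_cases hnext : (Finset.univ.filter (fun i : Fin N => s < T i)).Nonempty
  · obtain ⟨j, hj, hmin⟩ := Finset.exists_min_image _ T hnext
    simp only [Finset.mem_filter, Finset.mem_univ, true_and] at hj hmin
    have hjT := hTlt j
    refine ⟨T j - 1, by omega, by omega, Or.inl ⟨j, rfl⟩, cost_le _ (by omega) fun i hi => ?_⟩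
    by_contra! h
    have := hmin i h
    omega
  · refine ⟨Tstar, hs.trans hsT, le_rfl, Or.inr rfl, cost_le _ hsT fun i _ => ?_⟩
    by_contra! h
    exact hnext ⟨i, by simpa using h⟩
end

section
/- Each point $T_j - 1$ is a local minimum of the total cost function (refinement of Proposition 4). Let $C_{insp} : \mathbb{N} \to \mathbb{R}$ be strictly antitone, $N \ge 1$, $T : \mathrm{Fin}\, N \to \mathbb{N}$ strictly monotone, $n : \mathrm{Fin}\, N \to \mathbb{N}$, $C_{rep}, C_{out} : \mathbb{N} \to \mathbb{R}$, and $F(s) = C_{insp}(s) + \sum_{i : T_i \le s} \big(n_i\, C_{rep}(T_i) + C_{out}(T_i)\big)$. Fix $j \in \mathrm{Fin}\, N$ with $T_j \ge 2$, suppose no deadline $T_i$ satisfies $T_j - 2 < T_i \le T_j - 1$, and suppose the jump at $T_j$ exceeds the inspection-cost decrement: $n_j\, C_{rep}(T_j) + C_{out}(T_j) > C_{insp}(T_j - 1) - C_{insp}(T_j)$. Then $F(T_j - 1) < F(T_j - 2)$ and $F(T_j - 1) < F(T_j)$. -/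
open Finset

/-- Refinement of Proposition 4: each point `T j - 1` is a local minimum of the
total cost function `F`, provided the jump of the step part at `T j` exceeds
the decrement of the inspection cost. -/
theorem deadline_minus_one_is_local_min
    (Cinsp : ℕ → ℝ) (hCinsp : StrictAnti Cinsp)
    (N : ℕ) (hN : 1 ≤ N) (T : Fin N → ℕ) (hT : StrictMono T)
    (n : Fin N → ℕ) (Crep Cout : ℕ → ℝ) (F : ℕ → ℝ)
    (hF : ∀ s : ℕ, F s = Cinsp s +
      ∑ i ∈ Finset.univ.filter (fun i : Fin N => T i ≤ s),
        ((n i : ℝ) * Crep (T i) + Cout (T i)))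
    (j : Fin N) (hTj : 2 ≤ T j)
    (hgap : ∀ i : Fin N, ¬(T j - 2 < T i ∧ T i ≤ T j - 1))
    (hjump : (n j : ℝ) * Crep (T j) + Cout (T j) > Cinsp (T j - 1) - Cinsp (T j)) :
    F (T j - 1) < F (T j - 2) ∧ F (T j - 1) < F (T j) := by
  have filter_before : univ.filter (fun i => T i ≤ T j - 1) =
      univ.filter (fun i => T i ≤ T j - 2) := by
    ext i
    have := hgap i
    simp only [mem_filter, mem_univ, true_and]
    omega
  have filter_at : univ.filter (fun i => T i ≤ T j) =
      insert j (univ.filter (fun i => T i ≤ T j - 1)) := by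
    ext i
    have := hT.injective.eq_iff (a := i) (b := j)
    simp only [mem_filter, mem_univ, true_and, mem_insert, ← this]
    omega
  have not_mem : j ∉ univ.filter (fun i => T i ≤ T j - 1) := by
    simp only [mem_filter, mem_univ, true_and]
    omega
  constructor
  · rw [hF, hF, filter_before]
    have := hCinsp (show T j - 2 < T j - 1 by omega)
    linarith
  · rw [hF, hF (T j), filter_at, sum_insert not_mem]
    linarith
end
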